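/- A word w lies in C(12) if and only if every column C of P(w) satisfies: (a) if C has length 1 then its entry is 1 or 2, and moreover singleton columns with entry 1 and singleton columns with entry 2 both exist whenever any singleton column exists; (b) if C has length at least 2 then C contains both a 1 and a 2. -/

import Mathlib

namespace Plactic

/-- Insert `x` into a weakly increasing row, returning the new row and the bumped entry. -/
def rowInsert (x : ℕ) : List ℕ → List ℕ × Option ℕ
  | [] => ([x], none)
  | y :: ys =>
    if x < y then (x :: ys, some y)
    else
      let p := rowInsert x ys
      (y :: p.1, p.2)

/-- RSK insertion of `x` into a tableau given as a list of rows. -/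
def tInsert (x : ℕ) : List (List ℕ) → List (List ℕ)
  | [] => [[x]]
  | r :: rs =>
    match rowInsert x r with
    | (r', none) => r' :: rs
    | (r', some y) => r' :: tInsert y rs

/-- The RSK insertion tableau of a word. -/
def P (w : List ℕ) : List (List ℕ) := w.foldl (fun t x => tInsert x t) []

/-- The `i`-th row (0-indexed) of the insertion tableau of `w`. -/
def row (w : List ℕ) (i : ℕ) : List ℕ := (P w).getD i []

/-- The `j`-th column (0-indexed) of a tableau, read top to bottom. -/
def col (T : List (List ℕ)) (j : ℕ) : List ℕ := T.filterMap (fun r => r[j]?)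

/-- An elementary Knuth transposition. -/
inductive KStep : List ℕ → List ℕ → Prop
  | k1 (x y : List ℕ) (a b c : ℕ) : a ≤ b → b < c →
      KStep (x ++ [a, c, b] ++ y) (x ++ [c, a, b] ++ y)
  | k2 (x y : List ℕ) (a b c : ℕ) : a < b → b ≤ c →
      KStep (x ++ [b, a, c] ++ y) (x ++ [b, c, a] ++ y)

/-- Knuth equivalence: the equivalence relation generated by Knuth transpositions. -/
def KEquiv : List ℕ → List ℕ → Prop := Relation.EqvGen KStep

/-- The centralizer of `u` in the plactic monoid. -/
def Cent (u : List ℕ) : Set (List ℕ) := {w | KEquiv (u ++ w) (w ++ u)}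

end Plactic

/-!
Two words are Knuth equivalent exactly when their insertion tableaux agree, so membership in the
centralizer of `a b`, where `b = a + 1`, is the equation `P (a b w) = P (w a b)`. Let `r` and `s` be
the first two rows of `P w`. Reading `P w` row by row shows that the first row of the left tableau
is `a` followed by the row got by inserting `r` into `b s`, and that of the right tableau is got by
inserting `a b` into `r`. Comparing the lengths of the first two rows on both sides shows that
inserting `a b` bumps nothing out of `s`. This forces `r = a ^ (k + m) b ^ q` and `s = b ^ k` with
`m`, `q` both zero or both positive. As the columns of `P w` strictly increase, those of length at
least two are the ones with index less than the length of `s`, and the others are single entries of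
`r`; hence this shape of `r` and `s` is the condition on columns.
-/

namespace Plactic

variable {a b c x y z : ℕ} {r s u v w : List ℕ} {T : List (List ℕ)}

/-! ### Row insertion -/

@[simp] theorem rowInsert_nil (x : ℕ) : rowInsert x [] = ([x], none) := rfl

theorem rowInsert_cons_of_lt (h : x < y) (r : List ℕ) :
    rowInsert x (y :: r) = (x :: r, some y) := by
  simp [rowInsert, h]

theorem rowInsert_cons_of_le (h : y ≤ x) (r : List ℕ) :
    rowInsert x (y :: r) = (y :: (rowInsert x r).1, (rowInsert x r).2) := by
  simp [rowInsert, h]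

theorem rowInsert_perm (x : ℕ) (r : List ℕ) :
    ((rowInsert x r).2.toList ++ (rowInsert x r).1).Perm (x :: r) := by
  induction r with
  | nil => exact .refl _
  | cons y r ih =>
    rcases lt_or_ge x y with hxy | hyx
    · rw [rowInsert_cons_of_lt hxy]
      exact .swap x y r
    · rw [rowInsert_cons_of_le hyx]
      exact (List.perm_middle.trans (ih.cons y)).trans (.swap x y r)

theorem mem_of_mem_rowInsert (h : z ∈ (rowInsert x r).1) : z = x ∨ z ∈ r :=
  List.mem_cons.1 ((rowInsert_perm x r).mem_iff.1 (List.mem_append_right _ h))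

theorem mem_rowInsert_self (x : ℕ) (r : List ℕ) : x ∈ (rowInsert x r).1 := by
  induction r with
  | nil => simp
  | cons y r ih =>
    rcases lt_or_ge x y with hxy | hyx
    · simp [rowInsert_cons_of_lt hxy]
    · simp [rowInsert_cons_of_le hyx, ih]

theorem lt_of_bump (h : (rowInsert x r).2 = some z) : x < z := by
  induction r with
  | nil => simp at h
  | cons y r ih =>
    rcases lt_or_ge x y with hxy | hyx
    · rw [rowInsert_cons_of_lt hxy, Option.some_inj] at h
      exact h ▸ hxy
    · rw [rowInsert_cons_of_le hyx] at h
      exact ih h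

theorem mem_of_bump (h : (rowInsert x r).2 = some z) : z ∈ r :=
  (List.mem_cons.1 ((rowInsert_perm x r).mem_iff.1 (by simp [h]))).resolve_left (lt_of_bump h).ne'

theorem pairwise_rowInsert (hr : r.Pairwise (· ≤ ·)) (x : ℕ) :
    (rowInsert x r).1.Pairwise (· ≤ ·) := by
  induction r with
  | nil => simp
  | cons y r ih =>
    rw [List.pairwise_cons] at hr
    rcases lt_or_ge x y with hxy | hyx
    · rw [rowInsert_cons_of_lt hxy]
      exact List.pairwise_cons.2 ⟨fun z hz => hxy.le.trans (hr.1 z hz), hr.2⟩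
    · rw [rowInsert_cons_of_le hyx]
      refine List.pairwise_cons.2 ⟨fun z hz => ?_, ih hr.2⟩
      rcases mem_of_mem_rowInsert hz with rfl | hzr
      · exact hyx
      · exact hr.1 z hzr

theorem exists_rowInsert_eq_cons (hr : r.Pairwise (· ≤ ·)) (x : ℕ) :
    ∃ z s, (rowInsert x r).1 = z :: s ∧ z ≤ x := by
  have hx := mem_rowInsert_self x r
  obtain ⟨z, s, hzs⟩ := List.exists_cons_of_ne_nil (List.ne_nil_of_mem hx)
  have hsorted := pairwise_rowInsert hr x
  rw [hzs] at hx hsorted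
  refine ⟨z, s, hzs, ?_⟩
  rcases List.mem_cons.1 hx with rfl | hxs
  · exact le_rfl
  · exact List.rel_of_pairwise_cons hsorted hxs

theorem exists_bump_le_of_lt_mem (hr : r.Pairwise (· ≤ ·)) (hy : y ∈ r) (hxy : x < y) :
    ∃ z ≤ y, (rowInsert x r).2 = some z := by
  induction r with
  | nil => simp at hy
  | cons e r ih =>
    rw [List.pairwise_cons] at hr
    rcases lt_or_ge x e with hxe | hex
    · refine ⟨e, ?_, by rw [rowInsert_cons_of_lt hxe]⟩
      rcases List.mem_cons.1 hy with rfl | hyr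
      · exact le_rfl
      · exact hr.1 y hyr
    · rw [rowInsert_cons_of_le hex]
      refine ih hr.2 ((List.mem_cons.1 hy).resolve_left ?_)
      omega

theorem forall_le_of_bump_eq_none (hr : r.Pairwise (· ≤ ·)) (h : (rowInsert x r).2 = none) :
    ∀ y ∈ r, y ≤ x := by
  intro y hy
  by_contra! hxy
  obtain ⟨z, -, hz⟩ := exists_bump_le_of_lt_mem hr hy hxy
  simp [h] at hz

theorem rowInsert_of_forall_le (h : ∀ y ∈ r, y ≤ x) : rowInsert x r = (r ++ [x], none) := by
  induction r with
  | nil => rfl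
  | cons y r ih =>
    rw [rowInsert_cons_of_le (h y (by simp)), ih fun z hz => h z (by simp [hz])]
    rfl

theorem exists_bump_le_of_bump (hr : r.Pairwise (· ≤ ·)) (hxy : x ≤ y)
    (h : (rowInsert y (rowInsert x r).1).2 = some z) : ∃ z' ≤ z, (rowInsert x r).2 = some z' := by
  induction r with
  | nil => simp [rowInsert, hxy.not_gt] at h
  | cons e r ih =>
    rw [List.pairwise_cons] at hr
    rcases lt_or_ge x e with hxe | hex
    · rw [rowInsert_cons_of_lt hxe, rowInsert_cons_of_le hxy] at h
      exact ⟨e, hr.1 z (mem_of_bump h), by rw [rowInsert_cons_of_lt hxe]⟩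
    · rw [rowInsert_cons_of_le hex] at h ⊢
      rw [rowInsert_cons_of_le (hex.trans hxy)] at h
      exact ih hr.2 h

/-! ### Inserting words into rows and tableaux -/

/-- Row insertion of the letters of a word from left to right, the first argument being the row:
the resulting row together with the word of bumped letters. -/
def rowInsertWord : List ℕ → List ℕ → List ℕ × List ℕ
  | r, [] => (r, [])
  | r, x :: w =>
    ((rowInsertWord (rowInsert x r).1 w).1,
      (rowInsert x r).2.toList ++ (rowInsertWord (rowInsert x r).1 w).2)

/-- RSK insertion of the letters of a word into a tableau, so that `P w = tInsertWord [] w`. -/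
def tInsertWord (T : List (List ℕ)) (w : List ℕ) : List (List ℕ) :=
  w.foldl (fun t x => tInsert x t) T

@[simp] theorem rowInsertWord_nil (r : List ℕ) : rowInsertWord r [] = (r, []) := rfl

theorem rowInsertWord_cons (r : List ℕ) (x : ℕ) (w : List ℕ) :
    rowInsertWord r (x :: w) = ((rowInsertWord (rowInsert x r).1 w).1,
      (rowInsert x r).2.toList ++ (rowInsertWord (rowInsert x r).1 w).2) := rfl

theorem rowInsertWord_append (r u v : List ℕ) :
    rowInsertWord r (u ++ v) = ((rowInsertWord (rowInsertWord r u).1 v).1,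
      (rowInsertWord r u).2 ++ (rowInsertWord (rowInsertWord r u).1 v).2) := by
  induction u generalizing r with
  | nil => rfl
  | cons x u ih => simp [ih, rowInsertWord_cons]

theorem rowInsertWord_length (r w : List ℕ) :
    (rowInsertWord r w).1.length + (rowInsertWord r w).2.length = r.length + w.length := by
  induction w generalizing r with
  | nil => rfl
  | cons x w ih =>
    have hx := (rowInsert_perm x r).length_eq
    have hw := ih (rowInsert x r).1
    simp only [rowInsertWord_cons, List.length_append, List.length_cons] at hx ⊢
    omega

theorem rowInsertWord_cons_of_le (hw : ∀ x ∈ w, y ≤ x) (r : List ℕ) :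
    rowInsertWord (y :: r) w = (y :: (rowInsertWord r w).1, (rowInsertWord r w).2) := by
  induction w generalizing r with
  | nil => rfl
  | cons x w ih =>
    rw [rowInsertWord_cons, rowInsert_cons_of_le (hw x (by simp)),
      ih fun z hz => hw z (by simp [hz])]
    rfl

@[simp] theorem tInsertWord_nil (T : List (List ℕ)) : tInsertWord T [] = T := rfl

theorem tInsertWord_append (T : List (List ℕ)) (u v : List ℕ) :
    tInsertWord T (u ++ v) = tInsertWord (tInsertWord T u) v := List.foldl_append

theorem P_append (u v : List ℕ) : P (u ++ v) = tInsertWord (P u) v := List.foldl_append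

theorem tInsert_cons (x : ℕ) (r : List ℕ) (S : List (List ℕ)) :
    tInsert x (r :: S) = (rowInsert x r).1 :: tInsertWord S (rowInsert x r).2.toList := by
  rw [tInsert]
  rcases rowInsert x r with ⟨r', _ | y⟩ <;> rfl

theorem tInsertWord_cons (r : List ℕ) (S : List (List ℕ)) (w : List ℕ) :
    tInsertWord (r :: S) w = (rowInsertWord r w).1 :: tInsertWord S (rowInsertWord r w).2 := by
  induction w generalizing r S with
  | nil => rfl
  | cons x w ih =>
    rw [show tInsertWord (r :: S) (x :: w) = tInsertWord (tInsert x (r :: S)) w from rfl,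
      tInsert_cons, ih, rowInsertWord_cons, tInsertWord_append]

theorem tInsertWord_of_ne_nil (T : List (List ℕ)) (hw : w ≠ []) :
    tInsertWord T w = (rowInsertWord (T.headD []) w).1 ::
      tInsertWord T.tail (rowInsertWord (T.headD []) w).2 := by
  rcases T with _ | ⟨r, S⟩
  · obtain ⟨x, w, rfl⟩ := List.exists_cons_of_ne_nil hw
    exact tInsertWord_cons [] [] (x :: w)
  · exact tInsertWord_cons r S w

theorem headD_tInsertWord (T : List (List ℕ)) (w : List ℕ) :
    (tInsertWord T w).headD [] = (rowInsertWord (T.headD []) w).1 := by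
  rcases eq_or_ne w [] with rfl | hw
  · rfl
  · rw [tInsertWord_of_ne_nil T hw]
    rfl

/-! ### Semistandard tableaux -/

/-- `Dominates r s` says that the row `s` may stand below the row `r` in a tableau: it is not
longer, and the columns of the two rows strictly increase. -/
inductive Dominates : List ℕ → List ℕ → Prop
  | nil (r : List ℕ) : Dominates r []
  | cons {x y : ℕ} {r s : List ℕ} : x < y → Dominates r s → Dominates (x :: r) (y :: s)

/-- Semistandard Young tableaux, as lists of rows from top to bottom. Rows are nonempty, so that
trailing empty rows cannot distinguish two tableaux. -/
inductive IsTableau : List (List ℕ) → Prop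
  | nil : IsTableau []
  | cons {r : List ℕ} {S : List (List ℕ)} : r ≠ [] → r.Pairwise (· ≤ ·) →
      Dominates r (S.headD []) → IsTableau S → IsTableau (r :: S)

theorem Dominates.rowInsert_left (h : Dominates r s) (x : ℕ) : Dominates (rowInsert x r).1 s := by
  induction h with
  | nil => exact .nil _
  | @cons y z r s hyz h ih =>
    rcases lt_or_ge x y with hxy | hyx
    · rw [rowInsert_cons_of_lt hxy]
      exact .cons (hxy.trans hyz) h
    · rw [rowInsert_cons_of_le hyx]
      exact .cons hyz ih

theorem dominates_rowInsert_singleton_of_bump (h : (rowInsert x r).2 = some y) :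
    Dominates (rowInsert x r).1 [y] := by
  rcases r with _ | ⟨e, r⟩
  · simp at h
  rcases lt_or_ge x e with hxe | hex
  · have hxy := lt_of_bump h
    rw [rowInsert_cons_of_lt hxe]
    exact .cons hxy (.nil _)
  · have hxy := lt_of_bump h
    rw [rowInsert_cons_of_le hex]
    exact .cons (hex.trans_lt hxy) (.nil _)

theorem Dominates.rowInsert_bump (h : Dominates r s) (hy : (rowInsert x r).2 = some y) :
    Dominates (rowInsert x r).1 (rowInsert y s).1 := by
  induction h with
  | nil r => exact dominates_rowInsert_singleton_of_bump hy
  | @cons e f r s hef h ih =>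
    rcases lt_or_ge x e with hxe | hex
    · rw [rowInsert_cons_of_lt hxe] at hy ⊢
      obtain rfl : e = y := Option.some_inj.1 hy
      rw [rowInsert_cons_of_lt hef]
      exact .cons hxe h
    · rw [rowInsert_cons_of_le hex] at hy ⊢
      have hxy := lt_of_bump hy
      rcases lt_or_ge y f with hyf | hfy
      · rw [rowInsert_cons_of_lt hyf]
        exact .cons (hex.trans_lt hxy) (h.rowInsert_left x)
      · rw [rowInsert_cons_of_le hfy]
        exact .cons hef (ih hy)

theorem Dominates.exists_getElem?_lt (h : Dominates r s) {j : ℕ} (hy : s[j]? = some y) :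
    ∃ x, r[j]? = some x ∧ x < y := by
  induction h generalizing j with
  | nil => simp at hy
  | @cons x z r s hxz _ ih =>
    rcases j with _ | j
    · obtain rfl : z = y := by simpa using hy
      exact ⟨x, rfl, hxz⟩
    · simpa using ih (by simpa using hy)

theorem Dominates.forall_lt (h : Dominates r s) (hr : ∀ x ∈ r, a ≤ x) : ∀ y ∈ s, a < y := by
  intro y hy
  obtain ⟨j, hj⟩ := List.mem_iff_getElem?.1 hy
  obtain ⟨x, hx, hxy⟩ := h.exists_getElem?_lt hj
  exact (hr x (List.mem_of_getElem? hx)).trans_lt hxy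

namespace IsTableau

theorem tail (hT : IsTableau T) : IsTableau T.tail := by
  cases hT with
  | nil => exact .nil
  | cons _ _ _ hS => exact hS

theorem pairwise_headD (hT : IsTableau T) : (T.headD []).Pairwise (· ≤ ·) := by
  cases hT with
  | nil => exact .nil
  | cons _ hr _ _ => exact hr

theorem dominates_headD (hT : IsTableau T) : Dominates (T.headD []) (T.tail.headD []) := by
  cases hT with
  | nil => exact .nil _
  | cons _ _ hd _ => exact hd

theorem tInsert (hT : IsTableau T) (x : ℕ) : IsTableau (tInsert x T) := by
  induction hT generalizing x with
  | nil => exact .cons (by simp) (by simp) (.nil _) .nil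
  | @cons r S _ hr hd hS ih =>
    rw [tInsert_cons]
    refine .cons (List.ne_nil_of_mem (mem_rowInsert_self x r)) (pairwise_rowInsert hr x) ?_ ?_
    · rw [headD_tInsertWord]
      rcases hy : (rowInsert x r).2 with _ | y
      · exact hd.rowInsert_left x
      · exact hd.rowInsert_bump hy
    · rcases (rowInsert x r).2 with _ | y
      · exact hS
      · exact ih y

end IsTableau

theorem isTableau_P (w : List ℕ) : IsTableau (P w) := by
  induction w using List.reverseRecOn with
  | nil => exact .nil
  | append_singleton w x ih =>
    rw [P_append]
    exact ih.tInsert x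

/-! ### Knuth equivalence and insertion tableaux -/

/-- The elementary Knuth transpositions on three-letter words. -/
inductive KnuthTriple : List ℕ → List ℕ → Prop
  | k1 (a b c : ℕ) : a ≤ b → b < c → KnuthTriple [a, c, b] [c, a, b]
  | k2 (a b c : ℕ) : a < b → b ≤ c → KnuthTriple [b, a, c] [b, c, a]

theorem rowInsertWord_k1 (hab : a ≤ b) (hbc : b < c) (hr : r.Pairwise (· ≤ ·)) :
    (rowInsertWord r [a, c, b]).1 = (rowInsertWord r [c, a, b]).1 ∧
      Relation.EqvGen KnuthTriple (rowInsertWord r [a, c, b]).2 (rowInsertWord r [c, a, b]).2 := by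
  have hac := hab.trans_lt hbc
  induction r with
  | nil => simp [rowInsertWord, rowInsert, hab, hbc, hac, hac.le, not_lt.2, Relation.EqvGen.refl]
  | cons y r ih =>
    rw [List.pairwise_cons] at hr
    rcases le_or_gt y a with hya | hay
    · rw [rowInsertWord_cons_of_le (y := y) (by simp; omega),
        rowInsertWord_cons_of_le (y := y) (by simp; omega)]
      exact ⟨congrArg (y :: ·) (ih hr.2).1, (ih hr.2).2⟩
    rcases le_or_gt y c with hyc | hcy
    · obtain ⟨z, hzc, hz⟩ := exists_bump_le_of_lt_mem (pairwise_rowInsert hr.2 c)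
        (mem_rowInsert_self c r) hbc
      have hyz : y ≤ z := by
        rcases mem_of_mem_rowInsert (mem_of_bump hz) with rfl | hzr
        · exact hyc
        · exact hr.1 z hzr
      simp only [rowInsertWord_cons, rowInsertWord_nil, rowInsert_cons_of_lt hay,
        rowInsert_cons_of_le hyc, rowInsert_cons_of_le hac.le, rowInsert_cons_of_le hab,
        List.append_nil, true_and, hz]
      rcases hc : (rowInsert c r).2 with _ | c'
      · exact .refl _
      · exact .rel _ _ (.k1 y z c' hyz (hzc.trans_lt (lt_of_bump hc)))
    · have hby := hbc.trans hcy
      rcases r with _ | ⟨z, r⟩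
      · simp [rowInsertWord, rowInsert, hab, hbc, hac, hac.le, hay, hcy, not_lt.2,
          Relation.EqvGen.refl]
      · have hyz : y ≤ z := hr.1 z (by simp)
        simp only [rowInsertWord_cons, rowInsertWord_nil, rowInsert_cons_of_lt hay,
          rowInsert_cons_of_lt hcy, rowInsert_cons_of_le hac.le, rowInsert_cons_of_le hab,
          rowInsert_cons_of_lt hac, rowInsert_cons_of_lt (hcy.trans_le hyz),
          rowInsert_cons_of_lt (hby.trans_le hyz), rowInsert_cons_of_lt hbc, true_and]
        exact .symm _ _ (.rel _ _ (.k2 c y z hcy hyz))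

theorem rowInsertWord_k2 (hab : a < b) (hbc : b ≤ c) (hr : r.Pairwise (· ≤ ·)) :
    (rowInsertWord r [b, a, c]).1 = (rowInsertWord r [b, c, a]).1 ∧
      Relation.EqvGen KnuthTriple (rowInsertWord r [b, a, c]).2 (rowInsertWord r [b, c, a]).2 := by
  have hac := hab.trans_le hbc
  induction r with
  | nil => simp [rowInsertWord, rowInsert, hab, hbc, hac.le, not_lt.2, Relation.EqvGen.refl]
  | cons y r ih =>
    rw [List.pairwise_cons] at hr
    rcases le_or_gt y a with hya | hay
    · rw [rowInsertWord_cons_of_le (y := y) (by simp; omega),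
        rowInsertWord_cons_of_le (y := y) (by simp; omega)]
      exact ⟨congrArg (y :: ·) (ih hr.2).1, (ih hr.2).2⟩
    rcases le_or_gt y b with hyb | hby
    · simp only [rowInsertWord_cons, rowInsertWord_nil, rowInsert_cons_of_lt hay,
        rowInsert_cons_of_le hyb, rowInsert_cons_of_le hac.le,
        rowInsert_cons_of_le (hyb.trans hbc), List.append_nil, true_and]
      rcases hc : (rowInsert c (rowInsert b r).1).2 with _ | c'
      · simpa using .refl _
      · obtain ⟨b', hbc', hb⟩ := exists_bump_le_of_bump hr.2 hbc hc
        rw [hb]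
        exact .rel _ _ (.k2 y b' c' (hyb.trans_lt (lt_of_bump hb)) hbc')
    · simp only [rowInsertWord_cons, rowInsertWord_nil,
        rowInsert_cons_of_lt hby, rowInsert_cons_of_le hbc, rowInsert_cons_of_lt hab,
        rowInsert_cons_of_le hac.le, List.append_nil, true_and]
      rcases hc : (rowInsert c r).2 with _ | c'
      · exact .refl _
      · exact .rel _ _ (.k2 b y c' hby (hr.1 c' (mem_of_bump hc)))

theorem rowInsertWord_knuthTriple (h : KnuthTriple u v) (hr : r.Pairwise (· ≤ ·)) :
    (rowInsertWord r u).1 = (rowInsertWord r v).1 ∧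
      Relation.EqvGen KnuthTriple (rowInsertWord r u).2 (rowInsertWord r v).2 := by
  rcases h with ⟨a, b, c, hab, hbc⟩ | ⟨a, b, c, hab, hbc⟩
  · exact rowInsertWord_k1 hab hbc hr
  · exact rowInsertWord_k2 hab hbc hr

theorem tInsertWord_knuthTriple (hT : IsTableau T) (h : KnuthTriple u v) :
    tInsertWord T u = tInsertWord T v := by
  induction hT generalizing u v with
  | nil =>
    rcases h with ⟨a, b, c, hab, hbc⟩ | ⟨a, b, c, hab, hbc⟩
    · have hac := hab.trans_lt hbc
      simp [tInsertWord, tInsert, rowInsert, hbc, hac, hab, hac.le, not_lt.2]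
    · simp [tInsertWord, tInsert, rowInsert, hbc, hab, (hab.trans_le hbc).le, not_lt.2]
  | cons _ hr _ _ ih =>
    obtain ⟨hrow, hbumps⟩ := rowInsertWord_knuthTriple h hr
    rw [tInsertWord_cons, tInsertWord_cons, hrow]
    exact congrArg (_ :: ·) <|
      congrArg (Quot.lift (tInsertWord _) fun _ _ => ih) (Quot.eqvGen_sound hbumps)

theorem P_eq_of_kStep (h : KStep u v) : P u = P v := by
  rcases h with ⟨x, y, a, b, c, hab, hbc⟩ | ⟨x, y, a, b, c, hab, hbc⟩
  · rw [P_append, P_append, P_append, P_append,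
      tInsertWord_knuthTriple (isTableau_P x) (.k1 a b c hab hbc)]
  · rw [P_append, P_append, P_append, P_append,
      tInsertWord_knuthTriple (isTableau_P x) (.k2 a b c hab hbc)]

namespace KEquiv

theorem P_eq (h : KEquiv u v) : P u = P v :=
  congrArg (Quot.lift P fun _ _ => P_eq_of_kStep) (Quot.eqvGen_sound h)

theorem refl (u : List ℕ) : KEquiv u u := Relation.EqvGen.refl u

theorem symm (h : KEquiv u v) : KEquiv v u := Relation.EqvGen.symm _ _ h

theorem trans (h : KEquiv u v) (h' : KEquiv v w) : KEquiv u w := Relation.EqvGen.trans _ _ _ h h'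

theorem append (h : KEquiv u v) (x y : List ℕ) : KEquiv (x ++ u ++ y) (x ++ v ++ y) := by
  induction h with
  | rel _ _ h =>
    apply Relation.EqvGen.rel
    rcases h with ⟨x', y', a, b, c, hab, hbc⟩ | ⟨x', y', a, b, c, hab, hbc⟩
    · simpa using KStep.k1 (x ++ x') (y' ++ y) a b c hab hbc
    · simpa using KStep.k2 (x ++ x') (y' ++ y) a b c hab hbc
  | refl => exact .refl _
  | symm _ _ _ ih => exact ih.symm
  | trans _ _ _ _ _ ih₁ ih₂ => exact ih₁.trans ih₂

theorem append_left (h : KEquiv u v) (x : List ℕ) : KEquiv (x ++ u) (x ++ v) := by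
  simpa using h.append x []

theorem append_right (h : KEquiv u v) (y : List ℕ) : KEquiv (u ++ y) (v ++ y) := h.append [] y

theorem perm (h : KEquiv u v) : u.Perm v := by
  refine (List.Perm.eqv ℕ).eqvGen_iff.1 (h.mono fun _ _ hstep => ?_)
  rcases hstep with ⟨x, y, a, b, c, -, -⟩ | ⟨x, y, a, b, c, -, -⟩
  · exact ((List.Perm.swap c a [b]).append_left x).append_right y
  · exact (((List.Perm.swap c a []).cons b).append_left x).append_right y

end KEquiv

/-- The row reading word of a tableau: its rows from bottom to top, each from left to right. -/
def reading : List (List ℕ) → List ℕ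
  | [] => []
  | r :: S => reading S ++ r

theorem reading_eq_tail_append_headD (T : List (List ℕ)) :
    reading T = reading T.tail ++ T.headD [] := by
  cases T <;> rfl

theorem kEquiv_cons_append_singleton (hr : (y :: r).Pairwise (· ≤ ·)) (hxy : x < y) :
    KEquiv (y :: r ++ [x]) (y :: x :: r) := by
  induction r generalizing y with
  | nil => exact .refl _
  | cons z r ih =>
    rw [List.pairwise_cons] at hr
    have hyz : y ≤ z := hr.1 z (by simp)
    have hmove : KEquiv (y :: z :: r ++ [x]) (y :: z :: x :: r) :=
      (ih hr.2 (hxy.trans_le hyz)).append_left [y]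
    exact hmove.trans (.symm (.rel _ _ (KStep.k2 [] r x y z hxy hyz)))

theorem kEquiv_rowInsert (hr : r.Pairwise (· ≤ ·)) (x : ℕ) :
    KEquiv (r ++ [x]) ((rowInsert x r).2.toList ++ (rowInsert x r).1) := by
  induction r with
  | nil => exact .refl _
  | cons y r ih =>
    rcases lt_or_ge x y with hxy | hyx
    · rw [rowInsert_cons_of_lt hxy]
      exact kEquiv_cons_append_singleton hr hxy
    rw [List.pairwise_cons] at hr
    rw [rowInsert_cons_of_le hyx]
    refine ((ih hr.2).append_left [y]).trans ?_
    rcases hb : (rowInsert x r).2 with _ | b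
    · exact .refl _
    · obtain ⟨z, s, hzs, hzx⟩ := exists_rowInsert_eq_cons hr.2 x
      have hyz : y ≤ z := by
        rcases mem_of_mem_rowInsert (hzs ▸ List.mem_cons_self) with rfl | hzr
        · exact hyx
        · exact hr.1 z hzr
      rw [hzs]
      exact .rel _ _ (KStep.k1 [] s y z b hyz (hzx.trans_lt (lt_of_bump hb)))

theorem kEquiv_reading_tInsert (hT : IsTableau T) (x : ℕ) :
    KEquiv (reading T ++ [x]) (reading (tInsert x T)) := by
  induction hT generalizing x with
  | nil => exact .refl _
  | @cons r S _ hr _ _ ih =>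
    have hrow := (kEquiv_rowInsert hr x).append_left (reading S)
    rw [← List.append_assoc, ← List.append_assoc] at hrow
    rw [tInsert_cons]
    refine hrow.trans (KEquiv.append_right ?_ _)
    rcases (rowInsert x r).2 with _ | y
    · simpa using KEquiv.refl _
    · exact ih y

theorem kEquiv_reading_P (w : List ℕ) : KEquiv w (reading (P w)) := by
  induction w using List.reverseRecOn with
  | nil => exact .refl _
  | append_singleton w x ih =>
    rw [P_append]
    exact (ih.append_right [x]).trans (kEquiv_reading_tInsert (isTableau_P w) x)

theorem kEquiv_iff_P_eq : KEquiv u v ↔ P u = P v :=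
  ⟨KEquiv.P_eq, fun h => (kEquiv_reading_P u).trans (h ▸ (kEquiv_reading_P v).symm)⟩

theorem forall_le_headD_P (hw : ∀ x ∈ w, a ≤ x) : ∀ x ∈ (P w).headD [], a ≤ x := by
  intro x hx
  refine hw x ((kEquiv_reading_P w).perm.mem_iff.2 ?_)
  rw [reading_eq_tail_append_headD]
  exact List.mem_append_right _ hx

/-! ### Insertion of weakly increasing words -/

theorem rowInsertWord_of_dominates (hr : r.Pairwise (· ≤ ·)) (h : Dominates r s) :
    rowInsertWord s r = (r, s) := by
  induction r generalizing s with
  | nil =>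
    cases h
    rfl
  | cons x r ih =>
    rw [List.pairwise_cons] at hr
    cases h with
    | nil =>
      rw [rowInsertWord_cons, rowInsert_nil, rowInsertWord_cons_of_le hr.1, ih hr.2 (.nil r)]
      rfl
    | cons hxy h =>
      rw [rowInsertWord_cons, rowInsert_cons_of_lt hxy, rowInsertWord_cons_of_le hr.1, ih hr.2 h]
      rfl

theorem rowInsertWord_of_forall_le (hw : w.Pairwise (· ≤ ·)) (h : ∀ x ∈ w, ∀ y ∈ r, y ≤ x) :
    rowInsertWord r w = (r ++ w, []) := by
  induction r with
  | nil => exact rowInsertWord_of_dominates hw (.nil w)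
  | cons y r ih =>
    rw [rowInsertWord_cons_of_le fun x hx => h x hx y (by simp),
      ih fun x hx z hz => h x hx z (by simp [hz])]
    rfl

theorem bumps_sublist (hw : w.Pairwise (· ≤ ·)) (r : List ℕ) :
    (rowInsertWord r w).2.Sublist r := by
  induction r generalizing w with
  | nil => simp [rowInsertWord_of_dominates hw (.nil w)]
  | cons y r ih =>
    rcases w with _ | ⟨x, w⟩
    · simp
    have hxw := List.pairwise_cons.1 hw
    rcases lt_or_ge x y with hxy | hyx
    · rw [rowInsertWord_cons, rowInsert_cons_of_lt hxy, rowInsertWord_cons_of_le hxw.1]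
      exact (ih hxw.2).cons_cons y
    · rw [rowInsertWord_cons_of_le]
      · exact (ih hw).cons y
      · intro z hz
        rcases List.mem_cons.1 hz with rfl | hzw
        · exact hyx
        · exact hyx.trans (hxw.1 z hzw)

theorem length_le_length_rowInsertWord (hw : w.Pairwise (· ≤ ·)) (r : List ℕ) :
    w.length ≤ (rowInsertWord r w).1.length := by
  have hlen := rowInsertWord_length r w
  have hbumps := (bumps_sublist hw r).length_le
  omega

theorem rowInsertWord_replicate_append (hw : ∀ x ∈ w, a ≤ x) (p : ℕ) (r : List ℕ) :
    rowInsertWord (List.replicate p a ++ r) w =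
      (List.replicate p a ++ (rowInsertWord r w).1, (rowInsertWord r w).2) := by
  induction p with
  | zero => rfl
  | succ p ih =>
    rw [List.replicate_succ, List.cons_append, rowInsertWord_cons_of_le hw, ih]
    rfl

theorem rowInsertWord_replicate (hr : ∀ x ∈ r, a < x) (p : ℕ) :
    rowInsertWord r (List.replicate p a) = (List.replicate p a ++ r.drop p, r.take p) := by
  induction p generalizing r with
  | zero => simp
  | succ p ih =>
    have hle : ∀ x ∈ List.replicate p a, a ≤ x := fun x hx => (List.eq_of_mem_replicate hx).ge
    rcases r with _ | ⟨y, r⟩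
    · rw [List.replicate_succ, rowInsertWord_cons, rowInsert_nil, rowInsertWord_cons_of_le hle,
        ih (by simp)]
      simp
    · rw [List.replicate_succ, rowInsertWord_cons, rowInsert_cons_of_lt (hr y (by simp)),
        rowInsertWord_cons_of_le hle, ih fun x hx => hr x (by simp [hx])]
      simp

theorem rowInsertWord_replicate_pair {q : ℕ} (hab : a < b) (hq : q ≠ 0) :
    rowInsertWord (List.replicate q b) [a, b] = (a :: List.replicate q b, [b]) := by
  obtain ⟨q, rfl⟩ := Nat.exists_eq_succ_of_ne_zero hq
  simp only [List.replicate_succ, rowInsertWord_cons, rowInsert_cons_of_lt hab,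
    rowInsert_cons_of_le hab.le, rowInsertWord_nil]
  rw [rowInsert_of_forall_le fun y hy => (List.eq_of_mem_replicate hy).le,
    ← List.replicate_succ', List.replicate_succ]
  rfl

theorem rowInsertWord_replicate_append_of_forall_le (hr : ∀ x ∈ r, a < x)
    (hw : w.Pairwise (· ≤ ·)) (haw : ∀ x ∈ w, a ≤ x) (hrw : ∀ x ∈ w, ∀ y ∈ r, y ≤ x) (p : ℕ) :
    rowInsertWord r (List.replicate p a ++ w) =
      (List.replicate p a ++ r.drop p ++ w, r.take p) := by
  have hle : ∀ x ∈ w, ∀ y ∈ List.replicate p a ++ r.drop p, y ≤ x := by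
    intro x hx y hy
    rcases List.mem_append.1 hy with hy | hy
    · exact (List.eq_of_mem_replicate hy).trans_le (haw x hx)
    · exact hrw x hx y (List.mem_of_mem_drop hy)
  rw [rowInsertWord_append, rowInsertWord_replicate hr, rowInsertWord_of_forall_le hw hle,
    List.append_nil]

theorem exists_eq_replicate_append (hr : r.Pairwise (· ≤ ·)) (h : ∀ x ∈ r, a ≤ x) :
    ∃ p t, r = List.replicate p a ++ t ∧ ∀ x ∈ t, a < x := by
  induction r with
  | nil => exact ⟨0, [], by simp⟩
  | cons y r ih =>
    rcases (h y (by simp)).eq_or_lt with rfl | hay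
    · obtain ⟨p, t, rfl, ht⟩ := ih hr.of_cons fun x hx => h x (by simp [hx])
      exact ⟨p + 1, t, rfl, ht⟩
    · refine ⟨0, y :: r, rfl, fun x hx => ?_⟩
      rcases List.mem_cons.1 hx with rfl | hxr
      · exact hay
      · exact hay.trans_le (List.rel_of_pairwise_cons hr hxr)

/-! ### Insertion tableaux of reading words -/

theorem tInsertWord_tail_headD (hT : IsTableau T) : tInsertWord T.tail (T.headD []) = T := by
  induction hT with
  | nil => rfl
  | @cons r S hne hr hd _ ih =>
    change tInsertWord S r = r :: S
    rw [tInsertWord_of_ne_nil S hne, rowInsertWord_of_dominates hr hd, ih]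

theorem P_reading (hT : IsTableau T) : P (reading T) = T := by
  induction hT with
  | nil => rfl
  | @cons r S hne hr hd hS ih =>
    rw [reading, P_append, ih]
    exact tInsertWord_tail_headD (.cons hne hr hd hS)

theorem P_cons_of_le (hw : ∀ x ∈ w, a ≤ x) :
    P (a :: w) = (a :: (P w).headD []) :: (P w).tail := by
  rw [show P (a :: w) = tInsertWord [[a]] w from rfl, tInsertWord_cons,
    rowInsertWord_cons_of_le hw, show P w = tInsertWord [] w from rfl]
  rcases eq_or_ne w [] with rfl | hne
  · rfl
  · rw [tInsertWord_of_ne_nil [] hne]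
    rfl

theorem lt_of_mem_reading_tail (hT : IsTableau T) (ha : ∀ x ∈ T.headD [], a ≤ x) :
    ∀ x ∈ reading T.tail, a < x := by
  induction hT generalizing a with
  | nil => simp [reading]
  | @cons r S _ _ hd _ ih =>
    intro x hx
    have hS : ∀ y ∈ S.headD [], a < y := hd.forall_lt ha
    rw [List.tail_cons, reading_eq_tail_append_headD, List.mem_append] at hx
    rcases hx with hx | hx
    · exact a.lt_succ_self.trans (ih hS x hx)
    · exact hS x hx

theorem P_pair_append_reading (hT : IsTableau T) (ha : ∀ x ∈ T.headD [], a ≤ x) :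
    P ([a, a + 1] ++ reading T) =
      (a :: (rowInsertWord ((a + 1) :: T.tail.headD []) (T.headD [])).1) ::
        tInsertWord T.tail.tail (rowInsertWord ((a + 1) :: T.tail.headD []) (T.headD [])).2 := by
  have htail := lt_of_mem_reading_tail hT ha
  have hletters : ∀ x ∈ (a + 1) :: reading T, a ≤ x := by
    rw [reading_eq_tail_append_headD]
    simp only [List.mem_cons, List.mem_append]
    rintro x (rfl | hx | hx)
    · exact a.le_succ
    · exact (htail x hx).le
    · exact ha x hx
  have hsucc : P ((a + 1) :: reading T) =
      (rowInsertWord ((a + 1) :: T.tail.headD []) (T.headD [])).1 ::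
        tInsertWord T.tail.tail (rowInsertWord ((a + 1) :: T.tail.headD []) (T.headD [])).2 := by
    rw [reading_eq_tail_append_headD, ← List.cons_append, P_append, P_cons_of_le htail,
      P_reading hT.tail, tInsertWord_cons]
  change P (a :: (a + 1) :: reading T) = _
  rw [P_cons_of_le hletters, hsucc]
  rfl

theorem mem_cent_pair_iff_rowInsertWord (hw : ∀ x ∈ w, a ≤ x) (hT : P w = T) :
    w ∈ Cent [a, a + 1] ↔
      a :: (rowInsertWord ((a + 1) :: T.tail.headD []) (T.headD [])).1 =
          (rowInsertWord (T.headD []) [a, a + 1]).1 ∧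
        tInsertWord T.tail.tail (rowInsertWord ((a + 1) :: T.tail.headD []) (T.headD [])).2 =
          tInsertWord T.tail (rowInsertWord (T.headD []) [a, a + 1]).2 := by
  subst hT
  change KEquiv ([a, a + 1] ++ w) (w ++ [a, a + 1]) ↔ _
  rw [kEquiv_iff_P_eq, ((kEquiv_reading_P w).append_left [a, a + 1]).P_eq,
    P_pair_append_reading (isTableau_P w) (forall_le_headD_P hw), P_append,
    tInsertWord_of_ne_nil (P w) (by simp), List.cons_eq_cons]

/-! ### The first two rows of a tableau commuting with `a (a + 1)` -/

/-- The possible first two rows `r`, `s` of the insertion tableau of a word with letters at least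
`a` that commutes with `a (a + 1)` in the plactic monoid. The part of `r` beyond the length of `s`
is either empty or comprises both letters. -/
def CommutingRows (a : ℕ) (r s : List ℕ) : Prop :=
  ∃ k m q, r = List.replicate (k + m) a ++ List.replicate q (a + 1) ∧
    s = List.replicate k (a + 1) ∧ (m = 0 ↔ q = 0)

theorem length_bumps_of_cons_rowInsertWord_eq
    (hrow : a :: (rowInsertWord (b :: s) r).1 = (rowInsertWord r [a, b]).1) :
    (rowInsertWord (b :: s) r).2.length = s.length + (rowInsertWord r [a, b]).2.length := by
  have hleft := rowInsertWord_length (b :: s) r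
  have hright := rowInsertWord_length r [a, b]
  have hlen := congrArg List.length hrow
  simp only [List.length_cons, List.length_nil] at hleft hright hlen
  omega

/-- Compare the lengths of the second rows: the word bumped into the rows below `b :: s` weakly
increases, so it takes up at least its own length, and nothing can have left the row `s`. -/
theorem bumps_eq_nil_of_tInsertWord_eq {S : List (List ℕ)}
    (hr : r.Pairwise (· ≤ ·)) (hs : (b :: S.headD []).Pairwise (· ≤ ·))
    (hrow : a :: (rowInsertWord (b :: S.headD []) r).1 = (rowInsertWord r [a, b]).1)
    (hbelow : tInsertWord S.tail (rowInsertWord (b :: S.headD []) r).2 =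
      tInsertWord S (rowInsertWord r [a, b]).2) :
    (rowInsertWord (S.headD []) (rowInsertWord r [a, b]).2).2 = [] := by
  have hsecond := congrArg (fun T => (T.headD []).length) hbelow
  simp only [headD_tInsertWord] at hsecond
  have hle := length_le_length_rowInsertWord (hs.sublist (bumps_sublist hr (b :: S.headD [])))
    (S.tail.headD [])
  have hbumps := length_bumps_of_cons_rowInsertWord_eq hrow
  have hlen := rowInsertWord_length (S.headD []) (rowInsertWord r [a, b]).2
  exact List.eq_nil_of_length_eq_zero (by omega)

theorem eq_replicate_of_rowInsertWord_replicate_eq {p : ℕ} (hab : a < b)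
    (hs : (b :: s).Pairwise (· ≤ ·))
    (hrow : a :: (rowInsertWord (b :: s) (List.replicate p a)).1 =
      (rowInsertWord (List.replicate p a) [a, b]).1) :
    s = List.replicate p b := by
  have hbs := List.pairwise_cons.1 hs
  have hlt : ∀ x ∈ b :: s, a < x := by
    simpa [hab] using fun x hx => hab.trans_le (hbs.1 x hx)
  have hword : rowInsertWord (List.replicate p a) [a, b] = (List.replicate p a ++ [a, b], []) :=
    rowInsertWord_of_forall_le (by simp [hab.le]) (by simp; omega)
  rw [rowInsertWord_replicate hlt, hword, ← List.cons_append, ← List.replicate_succ,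
    List.replicate_succ'] at hrow
  have hdrop : (b :: s).drop p = [b] := by simpa using hrow
  have hlen : s.length = p := by
    have := congrArg List.length hdrop
    simp only [List.length_drop, List.length_cons, List.length_nil] at this
    omega
  rw [← hlen]
  refine List.eq_replicate_of_mem fun x hx => le_antisymm ?_ (hbs.1 x hx)
  have hsplit : (b :: s).take p ++ [b] = b :: s := by rw [← hdrop, List.take_append_drop]
  have hxb := List.mem_cons_of_mem b hx
  rw [← hsplit, List.pairwise_append] at hs
  rw [← hsplit] at hxb
  rcases List.mem_append.1 hxb with hx | hx
  · exact hs.2.2 x hx b (by simp)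
  · exact (List.mem_singleton.1 hx).le

theorem eq_of_mem_of_rowInsertWord_eq {e p : ℕ} {t : List ℕ}
    (hab : a < b) (hs : ∀ x ∈ s, b ≤ x) (hsorted : s.Pairwise (· ≤ ·))
    (hbt : ∀ x ∈ e :: t, b ≤ x) (ht : (e :: t).Pairwise (· ≤ ·))
    (hrow : a :: (rowInsertWord (b :: s) (List.replicate p a ++ e :: t)).1 =
      (rowInsertWord (List.replicate p a ++ e :: t) [a, b]).1)
    (hbumps : (rowInsertWord s (rowInsertWord (List.replicate p a ++ e :: t) [a, b]).2).2 = []) :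
    (∀ x ∈ e :: t, x = b) ∧ (∀ x ∈ s, x = b) ∧ s.length < p := by
  have hbe : b ≤ e := hbt e (by simp)
  have het := List.pairwise_cons.1 ht
  have hlt : ∀ x ∈ b :: s, a < x := by
    simpa [hab] using fun x hx => hab.trans_le (hs x hx)
  have hword : rowInsertWord (e :: t) [a, b] =
      (a :: (rowInsert b t).1, e :: (rowInsert b t).2.toList) := by
    simp [rowInsertWord_cons, rowInsert_cons_of_lt (hab.trans_le hbe), rowInsert_cons_of_le hab.le]
  have hlen := length_bumps_of_cons_rowInsertWord_eq hrow
  rw [rowInsertWord_replicate_append (by simp [hab.le]), hword] at hrow hbumps hlen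
  -- As `e` is bumped into `s` and bumps nothing there, it is at least every entry of `s`.
  have hse : ∀ x ∈ s, x ≤ e := by
    simp only [rowInsertWord_cons, List.append_eq_nil_iff, Option.toList_eq_nil_iff] at hbumps
    exact forall_le_of_bump_eq_none hsorted hbumps.1
  have hbse : ∀ x ∈ e :: t, ∀ y ∈ b :: s, y ≤ x := by
    intro x hx y hy
    have hye : y ≤ e := (List.mem_cons.1 hy).elim (fun h => h ▸ hbe) (hse y)
    exact (List.mem_cons.1 hx).elim (fun h => h ▸ hye) fun hxt => hye.trans (het.1 x hxt)
  rw [rowInsertWord_replicate_append_of_forall_le hlt ht (fun x hx => hab.le.trans (hbt x hx)) hbse]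
    at hrow hlen
  simp only [List.length_take, List.length_cons] at hlen
  have hnone : (rowInsert b t).2 = none := by
    rw [← Option.toList_eq_nil_iff, ← List.length_eq_zero_iff]
    omega
  have htb := forall_le_of_bump_eq_none het.2 hnone
  have hps : s.length < p := by omega
  have hrotate : e :: t = t ++ [b] := by
    rw [List.drop_eq_nil_of_le hps, List.append_nil, rowInsert_of_forall_le htb,
      ← List.cons_append, ← List.replicate_succ, List.replicate_succ', List.append_assoc] at hrow
    simpa using hrow
  have hetb : ∀ x ∈ e :: t, x = b := by
    refine fun x hx => le_antisymm ?_ (hbt x hx)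
    rw [hrotate, List.mem_append, List.mem_singleton] at hx
    exact hx.elim (htb x) le_of_eq
  exact ⟨hetb, fun x hx => le_antisymm ((hse x hx).trans_eq (hetb e (by simp))) (hs x hx), hps⟩

theorem commutingRows_of_rowInsertWord_eq {S : List (List ℕ)} (hS : IsTableau S)
    (hr : r.Pairwise (· ≤ ·)) (hd : Dominates r (S.headD [])) (har : ∀ x ∈ r, a ≤ x)
    (hrow : a :: (rowInsertWord ((a + 1) :: S.headD []) r).1 = (rowInsertWord r [a, a + 1]).1)
    (hbelow : tInsertWord S.tail (rowInsertWord ((a + 1) :: S.headD []) r).2 =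
      tInsertWord S (rowInsertWord r [a, a + 1]).2) :
    CommutingRows a r (S.headD []) := by
  have has : ∀ x ∈ S.headD [], a + 1 ≤ x := hd.forall_lt har
  have hsorted := List.pairwise_cons.2 ⟨has, hS.pairwise_headD⟩
  have hbumps := bumps_eq_nil_of_tInsertWord_eq hr hsorted hrow hbelow
  obtain ⟨p, t, rfl, ht⟩ := exists_eq_replicate_append hr har
  rcases t with _ | ⟨e, t⟩
  · rw [List.append_nil] at hrow ⊢
    exact ⟨p, 0, 0, by simp,
      eq_replicate_of_rowInsertWord_replicate_eq a.lt_succ_self hsorted hrow, Iff.rfl⟩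
  · obtain ⟨het, hs, hlt⟩ := eq_of_mem_of_rowInsertWord_eq a.lt_succ_self has hS.pairwise_headD ht
      (List.pairwise_append.1 hr).2.1 hrow hbumps
    refine ⟨(S.headD []).length, p - (S.headD []).length, (e :: t).length, ?_,
      List.eq_replicate_of_mem hs, ?_⟩
    · rw [← List.eq_replicate_of_mem het, Nat.add_sub_cancel' hlt.le]
    · rw [List.length_cons]
      omega

theorem CommutingRows.rowInsertWord_eq {S : List (List ℕ)} (hS : IsTableau S)
    (h : CommutingRows a r (S.headD [])) :
    a :: (rowInsertWord ((a + 1) :: S.headD []) r).1 = (rowInsertWord r [a, a + 1]).1 ∧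
      tInsertWord S.tail (rowInsertWord ((a + 1) :: S.headD []) r).2 =
        tInsertWord S (rowInsertWord r [a, a + 1]).2 := by
  obtain ⟨k, m, q, rfl, hs, hmq⟩ := h
  have htail := tInsertWord_tail_headD hS
  rw [hs] at htail ⊢
  rw [← List.replicate_succ, rowInsertWord_replicate_append (by simp),
    rowInsertWord_replicate_append_of_forall_le (by simp) (List.pairwise_replicate.2 (.inr le_rfl))
      (by simp) (by simp), List.drop_replicate, List.take_replicate]
  rcases eq_or_ne q 0 with rfl | hq
  · obtain rfl : m = 0 := hmq.2 rfl
    rw [show k + 1 - (k + 0) = 1 by omega, show min (k + 0) (k + 1) = k by omega, htail,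
      List.replicate_zero, rowInsertWord_of_forall_le (by simp) (by simp), ← List.cons_append,
      ← List.cons_append, ← List.replicate_succ, List.replicate_succ']
    simp
  · have hm : m ≠ 0 := fun hm => hq (hmq.1 hm)
    rw [show k + 1 - (k + m) = 0 by omega, show min (k + m) (k + 1) = k + 1 by omega,
      rowInsertWord_replicate_pair a.lt_succ_self hq, List.replicate_succ', tInsertWord_append,
      htail, ← List.cons_append, ← List.cons_append, ← List.replicate_succ, List.replicate_succ']
    simp

theorem mem_cent_pair_iff_commutingRows (hw : ∀ x ∈ w, a ≤ x) :
    w ∈ Cent [a, a + 1] ↔ CommutingRows a ((P w).headD []) ((P w).tail.headD []) := by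
  have hT := isTableau_P w
  rw [mem_cent_pair_iff_rowInsertWord hw rfl]
  exact ⟨fun h => commutingRows_of_rowInsertWord_eq hT.tail hT.pairwise_headD hT.dominates_headD
    (forall_le_headD_P hw) h.1 h.2, fun h => h.rowInsertWord_eq hT.tail⟩

theorem commutingRows_iff_drop_take (hr : r.Pairwise (· ≤ ·)) :
    CommutingRows a r s ↔
      ((∀ x ∈ r.drop s.length, x = a ∨ x = a + 1) ∧
        (r.drop s.length ≠ [] → a ∈ r.drop s.length ∧ a + 1 ∈ r.drop s.length)) ∧
      r.take s.length = List.replicate s.length a ∧ s = List.replicate s.length (a + 1) := by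
  constructor
  · rintro ⟨k, m, q, rfl, rfl, hmq⟩
    have hlen : (List.replicate k a).length = k := List.length_replicate
    rw [List.length_replicate, List.replicate_add, List.append_assoc, List.take_left' hlen,
      List.drop_left' hlen]
    simp only [List.mem_append, List.mem_replicate, ne_eq, List.append_eq_nil_iff,
      List.replicate_eq_nil_iff, and_self, and_true]
    exact ⟨fun x hx => hx.imp And.right And.right, by omega⟩
  · rintro ⟨⟨hletters, hboth⟩, htake, hs⟩
    have hsplit := List.take_append_drop s.length r
    obtain ⟨m, t, ht, hat⟩ := exists_eq_replicate_append (a := a)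
      (hr.sublist (List.drop_sublist s.length r)) fun x hx => by
        have := hletters x hx
        omega
    have htb : t = List.replicate t.length (a + 1) := List.eq_replicate_of_mem fun x hx =>
      (hletters x (by simp [ht, hx])).resolve_left (hat x hx).ne'
    refine ⟨s.length, m, t.length, ?_, hs, ?_⟩
    · rw [List.replicate_add, List.append_assoc, ← htb, ← ht, ← htake, hsplit]
    · rw [ht, htb] at hboth
      simp only [List.mem_append, List.mem_replicate, ne_eq, List.append_eq_nil_iff,
        List.replicate_eq_nil_iff] at hboth
      omega

/-! ### Columns -/

theorem take_eq_replicate_iff {k : ℕ} :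
    r.take k = List.replicate k a ↔ ∀ j < k, r[j]? = some a := by
  constructor
  · intro h j hj
    rw [← List.getElem?_take_of_lt hj, h, List.getElem?_replicate_of_lt hj]
  · refine fun h => List.ext_getElem? fun j => ?_
    rcases lt_or_ge j k with hj | hj
    · rw [List.getElem?_take_of_lt hj, h j hj, List.getElem?_replicate_of_lt hj]
    · simp [hj]

theorem eq_replicate_length_iff :
    s = List.replicate s.length a ↔ ∀ j < s.length, s[j]? = some a := by
  rw [← take_eq_replicate_iff, List.take_length]

theorem col_eq_headD_append (T : List (List ℕ)) (j : ℕ) :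
    col T j = (T.headD [])[j]?.toList ++ col T.tail j := by
  rcases T with _ | ⟨r, S⟩
  · simp [col]
  · rcases h : r[j]? with _ | x <;> simp [col, h]

namespace IsTableau

variable {j : ℕ}

theorem exists_getElem?_headD_lt (hT : IsTableau T) (hy : y ∈ col T.tail j) :
    ∃ x, (T.headD [])[j]? = some x ∧ x < y := by
  induction hT with
  | nil => simp [col] at hy
  | @cons r S _ _ hd _ ih =>
    rw [List.tail_cons, col_eq_headD_append, List.mem_append, Option.mem_toList] at hy
    rcases hy with hy | hy
    · exact hd.exists_getElem?_lt hy
    · obtain ⟨z, hz, hzy⟩ := ih hy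
      obtain ⟨x, hx, hxz⟩ := hd.exists_getElem?_lt hz
      exact ⟨x, hx, hxz.trans hzy⟩

theorem col_of_length_le (hT : IsTableau T) (hj : (T.tail.headD []).length ≤ j) :
    col T j = (T.headD [])[j]?.toList := by
  have hnone : (T.tail.headD [])[j]? = none := List.getElem?_eq_none hj
  have hbelow : col T.tail.tail j = [] := List.eq_nil_iff_forall_not_mem.2 fun y hy => by
    obtain ⟨x, hx, -⟩ := hT.tail.exists_getElem?_headD_lt hy
    cases hnone.symm.trans hx
  rw [col_eq_headD_append, col_eq_headD_append T.tail, hnone, hbelow]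
  exact List.append_nil _

theorem exists_col_eq_cons_cons (hT : IsTableau T) (hj : j < (T.tail.headD []).length) :
    ∃ x y l, (T.headD [])[j]? = some x ∧ (T.tail.headD [])[j]? = some y ∧ x < y ∧
      (∀ z ∈ l, y < z) ∧ col T j = x :: y :: l := by
  have hy := List.getElem?_eq_getElem hj
  obtain ⟨x, hx, hxy⟩ := hT.dominates_headD.exists_getElem?_lt hy
  refine ⟨x, _, col T.tail.tail j, hx, hy, hxy, fun z hz => ?_, ?_⟩
  · obtain ⟨y', hy', hyz⟩ := hT.tail.exists_getElem?_headD_lt hz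
    rw [hy, Option.some_inj] at hy'
    exact hy'.trans_lt hyz
  · rw [col_eq_headD_append, col_eq_headD_append T.tail, hx, hy]
    rfl

theorem col_eq_singleton_iff (hT : IsTableau T) :
    col T j = [x] ↔ (T.tail.headD []).length ≤ j ∧ (T.headD [])[j]? = some x := by
  rcases lt_or_ge j (T.tail.headD []).length with hj | hj
  · obtain ⟨x', y, l, -, -, -, -, hcol⟩ := hT.exists_col_eq_cons_cons hj
    exact iff_of_false (by simp [hcol]) fun h => hj.not_ge h.1
  · rw [hT.col_of_length_le hj, Option.toList_eq_singleton_iff]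
    exact (and_iff_right hj).symm

theorem exists_col_eq_singleton_iff (hT : IsTableau T) :
    (∃ j, col T j = [x]) ↔ x ∈ (T.headD []).drop (T.tail.headD []).length := by
  simp only [hT.col_eq_singleton_iff, List.mem_iff_getElem?, List.getElem?_drop]
  constructor
  · rintro ⟨j, hj, hx⟩
    exact ⟨j - (T.tail.headD []).length, by rwa [Nat.add_sub_cancel' hj]⟩
  · rintro ⟨i, hx⟩
    exact ⟨_, Nat.le_add_right _ i, hx⟩

theorem exists_length_col_eq_one_iff (hT : IsTableau T) :
    (∃ j, (col T j).length = 1) ↔ (T.headD []).drop (T.tail.headD []).length ≠ [] := by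
  simp only [List.length_eq_one_iff, ne_eq, List.eq_nil_iff_forall_not_mem, not_forall, not_not,
    ← hT.exists_col_eq_singleton_iff]
  exact exists_comm

theorem forall_singleton_col_iff (hT : IsTableau T) :
    (∀ j, (col T j).length = 1 → col T j = [a] ∨ col T j = [b]) ↔
      ∀ x ∈ (T.headD []).drop (T.tail.headD []).length, x = a ∨ x = b := by
  simp only [List.length_eq_one_iff, ← hT.exists_col_eq_singleton_iff]
  constructor
  · rintro h x ⟨j, hx⟩
    simpa [hx] using h j ⟨x, hx⟩
  · rintro h j ⟨x, hx⟩
    simpa [hx] using h x ⟨j, hx⟩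

theorem two_le_length_col_iff (hT : IsTableau T) :
    2 ≤ (col T j).length ↔ j < (T.tail.headD []).length := by
  rcases lt_or_ge j (T.tail.headD []).length with hj | hj
  · obtain ⟨x, y, l, -, -, -, -, hcol⟩ := hT.exists_col_eq_cons_cons hj
    exact iff_of_true (by simp [hcol]) hj
  · have hle := Option.length_toList_le (o := (T.headD [])[j]?)
    rw [hT.col_of_length_le hj]
    omega

theorem pair_mem_col_iff (hT : IsTableau T) (ha : ∀ x ∈ T.headD [], a ≤ x)
    (hj : j < (T.tail.headD []).length) :
    (a ∈ col T j ∧ a + 1 ∈ col T j) ↔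
      (T.headD [])[j]? = some a ∧ (T.tail.headD [])[j]? = some (a + 1) := by
  obtain ⟨x, y, l, hx, hy, hxy, hl, hcol⟩ := hT.exists_col_eq_cons_cons hj
  have hax := ha x (List.mem_of_getElem? hx)
  have hnot {z : ℕ} (hz : z ≤ y) : z ∉ l := fun hm => (hl z hm).not_ge hz
  have hal := hnot (hax.trans hxy.le)
  have hbl := hnot (hax.trans_lt hxy)
  simp only [hcol, hx, hy, List.mem_cons, hal, hbl, Option.some_inj, or_false]
  omega

theorem forall_long_col_iff (hT : IsTableau T) (ha : ∀ x ∈ T.headD [], a ≤ x) :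
    (∀ j, 2 ≤ (col T j).length → a ∈ col T j ∧ a + 1 ∈ col T j) ↔
      (T.headD []).take (T.tail.headD []).length = List.replicate (T.tail.headD []).length a ∧
        T.tail.headD [] = List.replicate (T.tail.headD []).length (a + 1) := by
  have hcol : (∀ j, 2 ≤ (col T j).length → a ∈ col T j ∧ a + 1 ∈ col T j) ↔
      ∀ j < (T.tail.headD []).length,
        (T.headD [])[j]? = some a ∧ (T.tail.headD [])[j]? = some (a + 1) :=
    forall_congr' fun j => by
      rw [hT.two_le_length_col_iff]
      exact forall_congr' (hT.pair_mem_col_iff ha)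
  rw [hcol, take_eq_replicate_iff, eq_replicate_length_iff]
  exact forall₂_and

end IsTableau

end Plactic

open Plactic in
theorem stmt_9_general (a : ℕ) (w : List ℕ) (hw : ∀ x ∈ w, a ≤ x) :
    w ∈ Cent [a, a + 1] ↔
      ((∀ j, (col (P w) j).length = 1 → col (P w) j = [a] ∨ col (P w) j = [a + 1]) ∧
        ((∃ j, (col (P w) j).length = 1) →
          (∃ j, col (P w) j = [a]) ∧ (∃ j, col (P w) j = [a + 1]))) ∧
      (∀ j, 2 ≤ (col (P w) j).length → a ∈ col (P w) j ∧ a + 1 ∈ col (P w) j) := by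
  have hT := isTableau_P w
  rw [mem_cent_pair_iff_commutingRows hw, commutingRows_iff_drop_take hT.pairwise_headD,
    hT.forall_singleton_col_iff, hT.exists_length_col_eq_one_iff, hT.exists_col_eq_singleton_iff,
    hT.exists_col_eq_singleton_iff, hT.forall_long_col_iff (forall_le_headD_P hw)]

open Plactic in
theorem stmt_9 (w : List ℕ) (hw : ∀ x ∈ w, 0 < x) :
    w ∈ Cent [1, 2] ↔
      ((∀ j, (col (P w) j).length = 1 → col (P w) j = [1] ∨ col (P w) j = [2]) ∧
        ((∃ j, (col (P w) j).length = 1) →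
          (∃ j, col (P w) j = [1]) ∧ (∃ j, col (P w) j = [2]))) ∧
      (∀ j, 2 ≤ (col (P w) j).length → 1 ∈ col (P w) j ∧ 2 ∈ col (P w) j) :=
  stmt_9_general 1 w hw
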